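/- arXiv:2110.04707 — 5 statements merged into one kernel-verified Lean document; each statement's English description precedes it below -/
import Mathlib

section
/- (Discrete Gronwall inequality with Mittag-Leffler bound) Let 0 < β < 1, Q > 0, y ≥ 0 and N ∈ ℕ, N ≥ 1. Suppose a nonnegative sequence (z_n)_{n=1}^N satisfies z_n ≤ (Q/N^β) · Σ_{i=1}^{n-1} z_i/(n-i)^{1-β} + y for every 1 ≤ n ≤ N. Then z_n ≤ y·(1 + E_{β,1}(Q·Γ(β))) for every 1 ≤ n ≤ N, where E_{β,1} denotes the Mittag-Leffler function. -/
/-!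
Write `c = Q Γ(β)` and let `u_K(n) = ∑_{k<K} c^k / Γ(βk+1) (n/N)^{βk}` be the partial sums of
`n ↦ E_{β,1}(c (n/N)^β)`, which solves the continuous Volterra equation
`u(t) = 1 + Q ∫_0^t u(s) (t-s)^{β-1} ds` (in the rescaled time `t = n/N`).

For `a ≥ 0` the function `s ↦ s^a (n-s)^{β-1}` is increasing on `(0,n)`, so its left Riemann sum
with unit steps is at most its integral, a Beta integral:
`∑_{1≤i<n} i^a (n-i)^{β-1} ≤ n^{a+β} Γ(a+1) Γ(β) / Γ(a+1+β)` (`sum_rpow_mul_rpow_le`). Applied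
with `a = βk`, this says that the discrete Volterra operator maps the `k`-th term of the series
below its `(k+1)`-st term (`volterra_mlTerm_le`). Hence `z_n ≤ y u_K(n)` for all `n ≤ min(K, N)`, by strong
induction on `n`. Finally `u_K(n) ≤ u_K(N) ≤ E_{β,1}(c)`; the last inequality needs
convergence of the Mittag-Leffler series, which follows from the ratio test and the log-convexity
of `Γ` (`summable_mittagLeffler`).
-/

open scoped BigOperators

/-- The Mittag-Leffler function `E_{p,q}(z) = ∑_{k=0}^∞ z^k / Γ(pk + q)`. -/
noncomputable def mittagLeffler (p q z : ℝ) : ℝ :=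
  ∑' k : ℕ, z ^ k / Real.Gamma (p * k + q)

open Real Filter Topology MeasureTheory

lemma intervalIntegrable_beta_kernel {a b : ℝ} (ha : 0 ≤ a) (hb : 0 < b) (x u v : ℝ) :
    IntervalIntegrable (fun s : ℝ => s ^ a * (x - s) ^ (b - 1)) volume u v := by
  have h : IntervalIntegrable (fun s : ℝ => (x - s) ^ (b - 1)) volume u v := by
    have := (intervalIntegral.intervalIntegrable_rpow' (a := x - u) (b := x - v)
      (show -1 < b - 1 by linarith)).comp_sub_left x
    simpa using this
  exact h.continuousOn_mul (Real.continuous_rpow_const ha).continuousOn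

lemma integral_beta_kernel {a b x : ℝ} (ha : 0 ≤ a) (hb : 0 < b) (hx : 0 < x) :
    ∫ s in (0 : ℝ)..x, s ^ a * (x - s) ^ (b - 1) =
      x ^ (a + b) * (Gamma (a + 1) * Gamma b / Gamma (a + 1 + b)) := by
  have h := Complex.betaIntegral_scaled ((a + 1 : ℝ) : ℂ) (b : ℂ) hx
  rw [Complex.betaIntegral_eq_Gamma_mul_div _ _ (by simp; linarith) (by simpa)] at h
  apply Complex.ofReal_injective
  rw [← intervalIntegral.integral_ofReal]
  have e : ((x ^ (a + b) * (Gamma (a + 1) * Gamma b / Gamma (a + 1 + b)) : ℝ) : ℂ) =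
      (x : ℂ) ^ (((a + 1 : ℝ) : ℂ) + b - 1) * (Complex.Gamma ((a + 1 : ℝ) : ℂ) *
        Complex.Gamma b / Complex.Gamma (((a + 1 : ℝ) : ℂ) + b)) := by
    rw [← Complex.ofReal_add, Complex.Gamma_ofReal, Complex.Gamma_ofReal, Complex.Gamma_ofReal]
    rw [Complex.ofReal_mul, Complex.ofReal_cpow hx.le]
    push_cast
    congr 2
    ring
  rw [e, ← h]
  refine intervalIntegral.integral_congr fun s hs => ?_
  rw [Set.uIcc_of_le hx.le] at hs
  rw [Complex.ofReal_mul, Complex.ofReal_cpow hs.1, Complex.ofReal_cpow (sub_nonneg.2 hs.2)]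
  push_cast
  congr 2
  ring

/-- The left Riemann sum of the increasing function `s ↦ s^a (n-s)^{b-1}` is at most its
integral over `[0,n]`, which is a Beta integral. -/
lemma sum_rpow_mul_rpow_le {a b : ℝ} (ha : 0 ≤ a) (hb : 0 < b) (hb1 : b < 1) {n : ℕ}
    (hn : 1 ≤ n) :
    ∑ i ∈ Finset.Ico 1 n, (i : ℝ) ^ a * ((n : ℝ) - i) ^ (b - 1) ≤
      (n : ℝ) ^ (a + b) * (Gamma (a + 1) * Gamma b / Gamma (a + 1 + b)) := by
  have hn0 : (0 : ℝ) < n := by exact_mod_cast hn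
  have hn1 : (1 : ℝ) ≤ n := by exact_mod_cast hn
  rw [← integral_beta_kernel ha hb hn0]
  have hI := intervalIntegrable_beta_kernel ha hb (n : ℝ)
  calc _ ≤ ∑ i ∈ Finset.Ico 1 n,
        ∫ s in (i : ℝ)..((i + 1 : ℕ) : ℝ), s ^ a * ((n : ℝ) - s) ^ (b - 1) := by
        refine Finset.sum_le_sum fun i hi => ?_
        have hin : (i : ℝ) + 1 ≤ n := by exact_mod_cast (Finset.mem_Ico.1 hi).2
        have hi0 : (0 : ℝ) ≤ i := i.cast_nonneg
        calc (i : ℝ) ^ a * ((n : ℝ) - i) ^ (b - 1)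
            = ∫ _s in (i : ℝ)..((i + 1 : ℕ) : ℝ), (i : ℝ) ^ a * ((n : ℝ) - i) ^ (b - 1) := by
              simp
          _ ≤ _ := by
              -- The endpoint `s = n` must be excluded, since there `0 ^ (b - 1) = 0`.
              refine intervalIntegral.integral_mono_on_of_le_Ioo (by simp) (by simp)
                (hI _ _) fun s hs => ?_
              have h1 := hs.1
              have h2 := hs.2
              push_cast at h2
              have h3 : ((n : ℝ) - i) ^ (b - 1) ≤ ((n : ℝ) - s) ^ (b - 1) :=
                Real.rpow_le_rpow_of_nonpos (by linarith) (by linarith) (by linarith)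
              exact mul_le_mul (Real.rpow_le_rpow hi0 h1.le ha) h3
                (Real.rpow_nonneg (by linarith) _) (Real.rpow_nonneg (by linarith) _)
    _ = ∫ s in ((1 : ℕ) : ℝ)..(n : ℝ), s ^ a * ((n : ℝ) - s) ^ (b - 1) :=
        intervalIntegral.sum_integral_adjacent_intervals_Ico
          (a := fun k : ℕ => (k : ℝ)) hn fun k _ => hI _ _
    _ ≤ _ := by
        refine intervalIntegral.integral_mono_interval (by simp) (by simpa using hn1) le_rfl
          ?_ (hI _ _)
        filter_upwards [ae_restrict_mem measurableSet_Ioc] with s hs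
        exact mul_nonneg (Real.rpow_nonneg hs.1.le _)
          (Real.rpow_nonneg (sub_nonneg.2 hs.2) _)

/-- Wendel-type bound on the Gamma quotient, from log-convexity at
`x + 1 = β (x + β) + (1 - β) (x + β + 1)`. -/
lemma Gamma_div_Gamma_le {x β : ℝ} (hx : 0 ≤ x) (hβ0 : 0 < β) (hβ1 : β < 1) :
    Gamma (x + 1) / Gamma (x + β + 1) ≤ (x + β) ^ (-β) := by
  have hp : 0 < x + β := by linarith
  have hG := Real.Gamma_pos_of_pos hp
  have h := Real.Gamma_mul_add_mul_le_rpow_Gamma_mul_rpow_Gamma hp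
    (show 0 < x + β + 1 by linarith) hβ0 (sub_pos.2 hβ1) (by ring)
  rw [show β * (x + β) + (1 - β) * (x + β + 1) = x + 1 by ring] at h
  rw [div_le_iff₀ (Real.Gamma_pos_of_pos (by linarith))]
  refine h.trans (le_of_eq ?_)
  rw [Real.Gamma_add_one hp.ne', Real.mul_rpow hp.le hG.le]
  rw [show (x + β) ^ (1 - β) = (x + β) ^ (-β) * (x + β) by
    rw [sub_eq_neg_add, Real.rpow_add hp, Real.rpow_one]]
  have e : Gamma (x + β) ^ β * Gamma (x + β) ^ (1 - β) = Gamma (x + β) := by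
    rw [← Real.rpow_add hG]; simp
  calc _ = (x + β) ^ (-β) * (x + β) * (Gamma (x + β) ^ β * Gamma (x + β) ^ (1 - β)) := by ring
    _ = _ := by rw [e]; ring

lemma summable_mittagLeffler {β c : ℝ} (hβ0 : 0 < β) (hβ1 : β < 1) (hc : 0 < c) :
    Summable fun k : ℕ => c ^ k / Gamma (β * k + 1) := by
  have hpos : ∀ k : ℕ, 0 < Gamma (β * k + 1) := fun k =>
    Real.Gamma_pos_of_pos (by positivity)
  refine summable_of_ratio_test_tendsto_lt_one (l := 0) one_pos
    (Eventually.of_forall fun k => (div_pos (pow_pos hc k) (hpos k)).ne') ?_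
  have hlim : Tendsto (fun k : ℕ => c * (β * (k : ℝ) + β) ^ (-β)) atTop (𝓝 0) := by
    have h1 : Tendsto (fun k : ℕ => β * (k : ℝ) + β) atTop atTop :=
      tendsto_atTop_add_const_right _ _ (tendsto_natCast_atTop_atTop.const_mul_atTop hβ0)
    simpa using ((tendsto_rpow_neg_atTop hβ0).comp h1).const_mul c
  refine squeeze_zero (fun k => by positivity) (fun k => ?_) hlim
  have h := Gamma_div_Gamma_le (x := β * k) (by positivity) hβ0 hβ1
  have e : β * ((k + 1 : ℕ) : ℝ) + 1 = β * k + β + 1 := by push_cast; ring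
  have hp' := hpos (k + 1)
  rw [Real.norm_of_nonneg (div_pos (pow_pos hc _) (hpos _)).le,
    Real.norm_of_nonneg (div_pos (pow_pos hc _) (hpos _)).le]
  rw [e] at hp' ⊢
  calc _ = c * (Gamma (β * k + 1) / Gamma (β * k + β + 1)) := by
        have := (hpos k).ne'
        field_simp
        ring
    _ ≤ _ := mul_le_mul_of_nonneg_left h hc.le

/-- The `k`-th term of `E_{β,1}(Q Γ(β) (x/N)^β)`. -/
noncomputable def mlTerm (β Q N : ℝ) (k : ℕ) (x : ℝ) : ℝ :=
  (Q * Gamma β) ^ k / Gamma (β * k + 1) * (x / N) ^ (β * k)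

/-- The discrete Volterra operator maps the `k`-th term of the Mittag-Leffler series below the
next term. -/
lemma volterra_mlTerm_le {β Q N : ℝ} (hβ0 : 0 < β) (hβ1 : β < 1) (hQ : 0 < Q) (hN : 0 < N)
    (k : ℕ) {n : ℕ} (hn : 1 ≤ n) :
    Q / N ^ β * ∑ i ∈ Finset.Ico 1 n, mlTerm β Q N k i / ((n : ℝ) - i) ^ (1 - β) ≤
      mlTerm β Q N (k + 1) n := by
  have hΓ := Real.Gamma_pos_of_pos hβ0
  have hΓk : 0 < Gamma (β * k + 1) := Real.Gamma_pos_of_pos (by positivity)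
  have hΓk' : 0 < Gamma (β * k + 1 + β) := Real.Gamma_pos_of_pos (by positivity)
  have hk : 0 ≤ β * (k : ℝ) := by positivity
  have hNk : 0 < N ^ (β * (k : ℝ)) := Real.rpow_pos_of_pos hN _
  have hNβ : 0 < N ^ β := Real.rpow_pos_of_pos hN _
  have hsum : ∑ i ∈ Finset.Ico 1 n, mlTerm β Q N k i / ((n : ℝ) - i) ^ (1 - β) =
      (Q * Gamma β) ^ k / Gamma (β * k + 1) / N ^ (β * (k : ℝ)) *
        ∑ i ∈ Finset.Ico 1 n, (i : ℝ) ^ (β * (k : ℝ)) * ((n : ℝ) - i) ^ (β - 1) := by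
    rw [Finset.mul_sum]
    refine Finset.sum_congr rfl fun i hi => ?_
    have hin : (i : ℝ) ≤ n := by exact_mod_cast (Finset.mem_Ico.1 hi).2.le
    rw [mlTerm, Real.div_rpow i.cast_nonneg hN.le, ← neg_sub 1 β,
      Real.rpow_neg (sub_nonneg.2 hin)]
    ring
  rw [hsum]
  calc _ ≤ Q / N ^ β * ((Q * Gamma β) ^ k / Gamma (β * k + 1) / N ^ (β * (k : ℝ)) *
        ((n : ℝ) ^ (β * k + β) * (Gamma (β * k + 1) * Gamma β / Gamma (β * k + 1 + β)))) := by
        gcongr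
        exact sum_rpow_mul_rpow_le hk hβ0 hβ1 hn
    _ = mlTerm β Q N (k + 1) n := by
        rw [mlTerm, Real.div_rpow n.cast_nonneg hN.le,
          show β * ((k + 1 : ℕ) : ℝ) = β * k + β by push_cast; ring, Real.rpow_add hN,
          show β * (k : ℝ) + β + 1 = β * k + 1 + β by ring]
        field_simp
        ring

/-- Discrete Gronwall inequality with a Mittag-Leffler bound. -/
theorem discrete_gronwall_mittag_leffler
    (N : ℕ) (hN : 1 ≤ N) (β Q y : ℝ)
    (hβ0 : 0 < β) (hβ1 : β < 1) (hQ : 0 < Q) (hy : 0 ≤ y)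
    (z : ℕ → ℝ)
    (hz_nonneg : ∀ n : ℕ, 1 ≤ n → n ≤ N → 0 ≤ z n)
    (hz : ∀ n : ℕ, 1 ≤ n → n ≤ N →
      z n ≤ Q / (N : ℝ) ^ β * ∑ i ∈ Finset.Ico 1 n, z i / ((n : ℝ) - (i : ℝ)) ^ (1 - β) + y) :
    ∀ n : ℕ, 1 ≤ n → n ≤ N →
      z n ≤ y * (1 + mittagLeffler β 1 (Q * Real.Gamma β)) := by
  have hN0 : (0 : ℝ) < N := by exact_mod_cast hN
  have hc : 0 < Q * Gamma β := mul_pos hQ (Real.Gamma_pos_of_pos hβ0)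
  have hNβ : 0 < (N : ℝ) ^ β := Real.rpow_pos_of_pos hN0 _
  have key : ∀ n : ℕ, 1 ≤ n → n ≤ N → ∀ K : ℕ, n ≤ K →
      z n ≤ y * ∑ k ∈ Finset.range K, mlTerm β Q N k n := by
    intro n
    induction n using Nat.strong_induction_on with
    | _ n ih =>
      intro hn hnN K hK
      obtain ⟨K, rfl⟩ : ∃ L, K = L + 1 := ⟨K - 1, by omega⟩
      refine (hz n hn hnN).trans ?_
      have h0 : mlTerm β Q N 0 n = 1 := by simp [mlTerm]
      rw [Finset.sum_range_succ', h0, mul_add, mul_one]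
      refine add_le_add_left ?_ y
      calc _ ≤ Q / (N : ℝ) ^ β * ∑ i ∈ Finset.Ico 1 n,
            (y * ∑ k ∈ Finset.range K, mlTerm β Q N k i) / ((n : ℝ) - (i : ℝ)) ^ (1 - β) := by
            refine mul_le_mul_of_nonneg_left (Finset.sum_le_sum fun i hi => ?_) (by positivity)
            obtain ⟨hi1, hin⟩ := Finset.mem_Ico.1 hi
            have hin' : (i : ℝ) ≤ n := by exact_mod_cast hin.le
            exact div_le_div_of_nonneg_right (ih i hin hi1 (by omega) K (by omega))
              (Real.rpow_nonneg (sub_nonneg.2 hin') _)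
        _ = y * ∑ k ∈ Finset.range K, Q / (N : ℝ) ^ β *
              ∑ i ∈ Finset.Ico 1 n, mlTerm β Q N k i / ((n : ℝ) - (i : ℝ)) ^ (1 - β) := by
            rw [← Finset.mul_sum, Finset.sum_comm, ← mul_assoc, mul_comm y, mul_assoc,
              Finset.mul_sum (a := y)]
            congr 1
            refine Finset.sum_congr rfl fun i _ => ?_
            rw [← Finset.sum_div, mul_div_assoc]
        _ ≤ _ := mul_le_mul_of_nonneg_left
            (Finset.sum_le_sum fun k _ => volterra_mlTerm_le hβ0 hβ1 hQ hN0 k hn) hy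
  intro n hn hnN
  refine (key n hn hnN n le_rfl).trans (mul_le_mul_of_nonneg_left ?_ hy)
  have hpos : ∀ k : ℕ, 0 ≤ (Q * Gamma β) ^ k / Gamma (β * k + 1) := fun k =>
    div_nonneg (pow_nonneg hc.le k) (Real.Gamma_pos_of_pos (by positivity)).le
  calc ∑ k ∈ Finset.range n, mlTerm β Q N k n
      ≤ ∑ k ∈ Finset.range n, (Q * Gamma β) ^ k / Gamma (β * k + 1) := by
        refine Finset.sum_le_sum fun k _ => ?_
        refine mul_le_of_le_one_right (hpos k) (Real.rpow_le_one (by positivity) ?_ (by positivity))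
        exact (div_le_one hN0).2 (by exact_mod_cast hnN)
    _ ≤ mittagLeffler β 1 (Q * Gamma β) :=
        (summable_mittagLeffler hβ0 hβ1 hc).sum_le_tsum _ fun k _ => hpos k
    _ ≤ _ := by linarith
end

section
/- Suppose Assumption A holds and g ∈ C(0,T] satisfies |g(t)| ≤ Q·t^{-β} on (0,T] for some constants Q > 0 and 0 < β < 1. Then the function t ↦ ₀I_t^{1-α(t)} g(t) = ∫₀^t g(s)/(Γ(1-α(s))·(t-s)^{α(s)}) ds is continuous on (0,T], i.e., continuous on [ε,T] for every 0 < ε < T. -/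
/-!
Substituting `s = t * u` turns the integral into `t * ∫ u in 0..1, F t u` with
`F t u = g (t u) / (Γ (1 - α (t u)) * (t - t u) ^ α (t u))`, an integral over a fixed interval.
The function `F` is jointly continuous on `[ε, T] × (0, 1)` (`kernel_continuousOn`), so by dominated
convergence it suffices to find an integrable majorant that does not depend on `t`.

* `1 / Γ` is bounded on `(0, 1]` (`exists_le_Gamma`), even though `α 0 = 1` is allowed.
* For `u ≤ 1/2` the factor `(t - t u) ^ (-α (t u))` is bounded and `g` contributes `u ^ (-β)`.
* For `u ≥ 1/2` the argument `t u` stays in `[ε/2, T]`, where by compactness `α ≤ a < 1`; the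
  kernel contributes `(1 - u) ^ (-a)` and `g` is bounded.

So a multiple of `u ^ (-β) + (1 - u) ^ (-a)` is a majorant (`kernel_bound`).
-/

open MeasureTheory Set

/-- Assumption A of the paper: `α ∈ C²[0,T]` with `0 < α* ≤ α(t) < 1` on `(0,T]`,
and `f` twice differentiable with first- and second-order derivatives bounded by `L`. -/
structure AssumptionA (T : ℝ) (α : ℝ → ℝ) (f : ℝ → ℝ → ℝ) (αstar L : ℝ) : Prop where
  hT : 0 < T
  hα_smooth : ContDiffOn ℝ 2 α (Set.Icc 0 T)
  hαstar_pos : 0 < αstar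
  hαstar_lt_one : αstar < 1
  hα_lb : ∀ t ∈ Set.Ioc 0 T, αstar ≤ α t
  hα_ub : ∀ t ∈ Set.Ioc 0 T, α t < 1
  hL_pos : 0 < L
  hf_smooth : ContDiff ℝ 2 (Function.uncurry f)
  hf_bd1 : ∀ p : ℝ × ℝ, p.2 ∈ Set.Icc 0 T → ‖fderiv ℝ (Function.uncurry f) p‖ ≤ L
  hf_bd2 : ∀ p : ℝ × ℝ, p.2 ∈ Set.Icc 0 T → ‖fderiv ℝ (fderiv ℝ (Function.uncurry f)) p‖ ≤ L


/-- `Γ` is bounded below on `(0, 1]`: there `Γ x = Γ (x + 1) / x ≥ Γ (x + 1)`, and `Γ` has a positive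
minimum on `[1, 2]`. -/
lemma exists_le_Gamma : ∃ m : ℝ, 0 < m ∧ ∀ x : ℝ, 0 < x → x ≤ 1 → m ≤ Real.Gamma x := by
  have hc : ContinuousOn Real.Gamma (Icc 1 2) := by
    intro x hx
    refine (Real.differentiableAt_Gamma fun n => ?_).continuousAt.continuousWithinAt
    have : (0 : ℝ) ≤ n := n.cast_nonneg
    linarith [hx.1]
  obtain ⟨y, hy, hmin⟩ := isCompact_Icc.exists_isMinOn (nonempty_Icc.2 (by norm_num)) hc
  refine ⟨Real.Gamma y, Real.Gamma_pos_of_pos (by linarith [hy.1]), fun x hx0 hx1 => ?_⟩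
  have h1 : Real.Gamma y ≤ Real.Gamma (x + 1) := hmin ⟨by linarith, by linarith⟩
  rw [Real.Gamma_add_one hx0.ne'] at h1
  nlinarith [Real.Gamma_pos_of_pos hx0]

lemma kernel_continuousOn {T ε : ℝ} {α g : ℝ → ℝ} (hε : 0 < ε)
    (hα : ContinuousOn α (Icc 0 T)) (hα1 : ∀ t ∈ Ioc 0 T, α t < 1)
    (hg : ContinuousOn g (Ioc 0 T)) :
    ContinuousOn (fun p : ℝ × ℝ => g (p.1 * p.2) /
      (Real.Gamma (1 - α (p.1 * p.2)) * (p.1 - p.1 * p.2) ^ α (p.1 * p.2)))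
      (Icc ε T ×ˢ Ioo 0 1) := by
  have hmaps : MapsTo (fun p : ℝ × ℝ => p.1 * p.2) (Icc ε T ×ˢ Ioo 0 1) (Ioc 0 T) := by
    rintro ⟨t, u⟩ ⟨⟨h1, h2⟩, h3, h4⟩
    simp only [] at h1 h2 h3 h4 ⊢
    exact ⟨by have : 0 < t := by linarith
              positivity, by nlinarith⟩
  have hmul : ContinuousOn (fun p : ℝ × ℝ => p.1 * p.2) (Icc ε T ×ˢ Ioo 0 1) := by fun_prop
  have hg' := hg.comp hmul hmaps
  have hα' := (hα.mono Ioc_subset_Icc_self).comp hmul hmaps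
  have hpos : ∀ p ∈ Icc ε T ×ˢ Ioo (0 : ℝ) 1, 0 < p.1 - p.1 * p.2 := by
    rintro ⟨t, u⟩ ⟨⟨h1, h2⟩, h3, h4⟩
    simp only [] at h1 h2 h3 h4 ⊢
    nlinarith
  have hΓ : ContinuousOn (fun p : ℝ × ℝ => Real.Gamma (1 - α (p.1 * p.2)))
      (Icc ε T ×ˢ Ioo 0 1) := by
    intro p hp
    refine ContinuousAt.comp_continuousWithinAt (g := Real.Gamma)
      (Real.differentiableAt_Gamma fun n => ?_).continuousAt
      (continuousWithinAt_const.sub (hα' p hp))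
    have : (0 : ℝ) ≤ n := n.cast_nonneg
    have h := hα1 _ (hmaps hp)
    simp only at h ⊢
    linarith
  refine hg'.div (hΓ.mul (ContinuousOn.rpow (by fun_prop) hα' fun p hp => Or.inl (hpos p hp).ne'))
    fun p hp => ?_
  have h1 := Real.Gamma_pos_of_pos (sub_pos.2 (hα1 _ (hmaps hp)))
  have h2 := Real.rpow_pos_of_pos (hpos p hp) (α (p.1 * p.2))
  exact (mul_pos h1 h2).ne'

/-- The majorant for dominated convergence. Here `m` bounds `Γ` from below and `a` bounds `α` from
above on `[ε/2, T]`, the range of `t * u` for `u ≥ 1/2`. -/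
lemma kernel_bound {T ε Q β a m : ℝ} {α g : ℝ → ℝ} (hε : 0 < ε) (hQ : 0 < Q)
    (hβ0 : 0 < β) (hβ1 : β < 1) (hm : 0 < m)
    (hΓ : ∀ x : ℝ, 0 < x → x ≤ 1 → m ≤ Real.Gamma x)
    (hα0 : ∀ t ∈ Ioc 0 T, 0 < α t) (hα1 : ∀ t ∈ Ioc 0 T, α t < 1)
    (ha : ∀ t ∈ Icc (ε / 2) T, α t ≤ a)
    (hg : ∀ t ∈ Ioc 0 T, |g t| ≤ Q * t ^ (-β))
    {t u : ℝ} (ht : t ∈ Icc ε T) (hu : u ∈ Ioo (0 : ℝ) 1) :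
    ‖g (t * u) / (Real.Gamma (1 - α (t * u)) * (t - t * u) ^ α (t * u))‖ ≤
      Q * ε ^ (-β) * m⁻¹ * (1 + ε⁻¹) * 2 * (u ^ (-β) + (1 - u) ^ (-a)) := by
  obtain ⟨ht1, ht2⟩ := ht
  obtain ⟨hu0, hu1⟩ := hu
  have ht0 : 0 < t := by linarith
  have hmem : t * u ∈ Ioc 0 T := ⟨by positivity, by nlinarith⟩
  have A0 := hα0 _ hmem
  have A1 := hα1 _ hmem
  have hv : 0 < 1 - u := by linarith
  have hG := hΓ (1 - α (t * u)) (by linarith) (by linarith)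
  have hgb : |g (t * u)| ≤ Q * ε ^ (-β) * u ^ (-β) := by
    refine (hg _ hmem).trans ?_
    rw [Real.mul_rpow ht0.le hu0.le, mul_assoc]
    gcongr ?_ * (?_ * _)
    exact Real.rpow_le_rpow_of_nonpos hε ht1 (by linarith)
  have ht' : t ^ (-α (t * u)) ≤ 1 + ε⁻¹ := by
    refine (Real.rpow_le_rpow_of_nonpos hε ht1 (by linarith)).trans ?_
    rcases le_total 1 ε with h | h
    · have := Real.rpow_le_one_of_one_le_of_nonpos h (show -α (t * u) ≤ 0 by linarith)
      have : 0 < ε⁻¹ := by positivity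
      linarith
    · have := Real.rpow_le_rpow_of_exponent_ge hε h (show -1 ≤ -α (t * u) by linarith)
      rw [Real.rpow_neg_one] at this
      linarith
  have hub : u ^ (-β) * (1 - u) ^ (-α (t * u)) ≤ 2 * (u ^ (-β) + (1 - u) ^ (-a)) := by
    have p1 : 0 < u ^ (-β) := Real.rpow_pos_of_pos hu0 _
    have p2 : 0 < (1 - u) ^ (-a) := Real.rpow_pos_of_pos hv _
    -- On `[1/2, 1]` a power with exponent at least `-1` is at most `2`.
    have key : ∀ x c : ℝ, 1 / 2 ≤ x → x ≤ 1 → c ≤ 1 → x ^ (-c) ≤ 2 := by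
      intro x c hx hx1 hc
      have h0 : 0 < x := by linarith
      refine (Real.rpow_le_rpow_of_exponent_ge h0 hx1 (show -1 ≤ -c by linarith)).trans ?_
      rw [Real.rpow_neg_one]
      exact inv_le_of_inv_le₀ (by norm_num) (by linarith)
    rcases le_total u (1 / 2) with h | h
    · have := key (1 - u) (α (t * u)) (by linarith) (by linarith) A1.le
      nlinarith
    · have h1 := key u β h hu1.le hβ1.le
      have h2 : (1 - u) ^ (-α (t * u)) ≤ (1 - u) ^ (-a) :=
        Real.rpow_le_rpow_of_exponent_ge hv (by linarith)
          (neg_le_neg (ha _ ⟨by nlinarith, hmem.2⟩))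
      have p3 : 0 < (1 - u) ^ (-α (t * u)) := Real.rpow_pos_of_pos hv _
      nlinarith
  have hGp : 0 < Real.Gamma (1 - α (t * u)) := hm.trans_le hG
  have hfac : t - t * u = t * (1 - u) := by ring
  have hpw : 0 < (t * (1 - u)) ^ α (t * u) := Real.rpow_pos_of_pos (by positivity) _
  rw [hfac, Real.norm_eq_abs, abs_div, abs_of_pos (mul_pos hGp hpw), div_eq_mul_inv, mul_inv,
    ← Real.rpow_neg (by positivity), Real.mul_rpow ht0.le hv.le]
  have hGi : (Real.Gamma (1 - α (t * u)))⁻¹ ≤ m⁻¹ := inv_anti₀ hm hG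
  calc |g (t * u)| * ((Real.Gamma (1 - α (t * u)))⁻¹ *
        (t ^ (-α (t * u)) * (1 - u) ^ (-α (t * u))))
      ≤ (Q * ε ^ (-β) * u ^ (-β)) * (m⁻¹ * ((1 + ε⁻¹) * (1 - u) ^ (-α (t * u)))) := by
        gcongr
    _ = Q * ε ^ (-β) * m⁻¹ * (1 + ε⁻¹) * (u ^ (-β) * (1 - u) ^ (-α (t * u))) := by ring
    _ ≤ Q * ε ^ (-β) * m⁻¹ * (1 + ε⁻¹) * (2 * (u ^ (-β) + (1 - u) ^ (-a))) := by gcongr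
    _ = _ := by ring

/-- If `g ∈ C(0,T]` with `|g(t)| ≤ Q t^{-β}`, then `₀I_t^{1-α(t)} g` is continuous on `(0,T]`,
i.e. continuous on `[ε,T]` for every `0 < ε < T`. -/
theorem varOrderIntegral_continuousOn
    (T αstar L Q β : ℝ) (α : ℝ → ℝ) (f : ℝ → ℝ → ℝ) (g : ℝ → ℝ)
    (hA : AssumptionA T α f αstar L)
    (hQ : 0 < Q) (hβ0 : 0 < β) (hβ1 : β < 1)
    (hg_cont : ContinuousOn g (Set.Ioc 0 T))
    (hg_bd : ∀ t ∈ Set.Ioc 0 T, |g t| ≤ Q * t ^ (-β)) :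
    ∀ ε : ℝ, 0 < ε → ε < T →
      ContinuousOn
        (fun t => ∫ s in (0:ℝ)..t, g s / (Real.Gamma (1 - α s) * (t - s) ^ α s))
        (Set.Icc ε T) := by
  intro ε hε hεT
  obtain ⟨m, hm, hΓ⟩ := exists_le_Gamma
  have hαc := hA.hα_smooth.continuousOn
  have hα0 : ∀ t ∈ Ioc 0 T, 0 < α t := fun t ht => hA.hαstar_pos.trans_le (hA.hα_lb t ht)
  obtain ⟨s₀, hs₀, hmax⟩ := (isCompact_Icc (a := ε / 2) (b := T)).exists_isMaxOn
    (nonempty_Icc.2 (by linarith)) (hαc.mono (Icc_subset_Icc_left (by linarith)))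
  have ha1 : α s₀ < 1 := hA.hα_ub s₀ ⟨by linarith [hs₀.1], hs₀.2⟩
  have hF := kernel_continuousOn hε hαc hA.hα_ub hg_cont
  have hbound := fun (t u : ℝ) => kernel_bound (t := t) (u := u) hε hQ hβ0 hβ1 hm hΓ hα0 hA.hα_ub
    (fun t ht => hmax ht) hg_bd
  have hsub : ∀ t : ℝ, ∫ s in (0 : ℝ)..t, g s / (Real.Gamma (1 - α s) * (t - s) ^ α s) =
      t * ∫ u in (0 : ℝ)..1,
        g (t * u) / (Real.Gamma (1 - α (t * u)) * (t - t * u) ^ α (t * u)) := by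
    intro t
    rw [intervalIntegral.mul_integral_comp_mul_left
      (f := fun s => g s / (Real.Gamma (1 - α s) * (t - s) ^ α s)), mul_zero, mul_one]
  simp only [hsub]
  refine continuousOn_id.mul fun t ht => ?_
  -- The kernel is only controlled on the open interval, so the endpoint `u = 1` is discarded.
  have hae : ∀ᵐ u : ℝ, u ∈ uIoc (0 : ℝ) 1 → u ∈ Ioo (0 : ℝ) 1 := by
    filter_upwards [Measure.ae_ne volume (1 : ℝ)] with u hu h
    rw [uIoc_of_le zero_le_one] at h
    exact ⟨h.1, lt_of_le_of_ne h.2 hu⟩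
  refine intervalIntegral.continuousWithinAt_of_dominated_interval
    (bound := fun u => Q * ε ^ (-β) * m⁻¹ * (1 + ε⁻¹) * 2 * (u ^ (-β) + (1 - u) ^ (-α s₀)))
    ?_ ?_ ?_ ?_
  · filter_upwards [self_mem_nhdsWithin] with t' ht'
    rw [uIoc_of_le zero_le_one, ← restrict_Ioo_eq_restrict_Ioc]
    refine ContinuousOn.aestronglyMeasurable ?_ measurableSet_Ioo
    exact hF.comp (f := fun u : ℝ => (t', u)) (by fun_prop) fun u hu => ⟨ht', hu⟩
  · filter_upwards [self_mem_nhdsWithin] with t' ht'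
    filter_upwards [hae] with u hu h
    exact hbound t' u ht' (hu h)
  · refine IntervalIntegrable.const_mul (IntervalIntegrable.add ?_ ?_) _
    · exact intervalIntegral.intervalIntegrable_rpow' (by linarith)
    · have h := (intervalIntegral.intervalIntegrable_rpow' (a := 0) (b := 1)
        (show -1 < -α s₀ by linarith)).comp_sub_left 1
      simpa using h.symm
  · filter_upwards [hae] with u hu h
    exact (hF.comp (f := fun t : ℝ => (t, u)) (by fun_prop) fun t' ht' => ⟨ht', hu h⟩) t ht
end

section
/- Suppose Assumption A holds, and define K(t,s) := (t-s)^{α(t)-α(s)}/Γ(1+α(t)-α(s)) for 0 ≤ s < t ≤ T. Then the partial derivative of K with respect to s satisfies ∂_s K(t,s) = K(t,s)·[α'(s)·Γ'(1+α(t)-α(s))/Γ(1+α(t)-α(s)) − α'(s)·ln(t-s) − (α(t)-α(s))/(t-s)], and there exists a constant Q > 0 (depending only on α and T) such that |∂_s K(t,s)| ≤ Q·(1 + |ln(t-s)|) for all 0 ≤ s < t ≤ T. Consequently, for every 0 < ε < 1 there exists Q_ε > 0 with |∂_s K(t,s)| ≤ Q_ε·(t-s)^{-ε}. -/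
/-!
Write `δ = α t - α s`. Since `α` is continuous with values in `[α*, 1)` on `(0, T]`, its values on
`[0, T]` lie in `[α*, 1]`, so `1 + δ ∈ [α*, 2]`, a compact set on which `Γ` is differentiable and
positive; the formula is then the chain rule (`hasDerivWithinAt_kernel`).

For the bound, `α` is Lipschitz on `[0, T]` with a constant `M` bounding `|α'|`. Hence
`|δ / (t - s)| ≤ M` and `(t - s) ^ δ = exp (δ log (t - s)) ≤ exp (M |(t - s) log (t - s)|)`, which is
bounded because `x log x` is continuous on `[0, T]`. On `[α*, 2]` the function `Γ` is bounded below
by compactness, and `|Γ'|` is bounded because `Γ` is convex, so that `Γ'` is monotone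
(`exists_Gamma_bounds`). Only the logarithm remains unbounded, and it is absorbed by any negative
power of `t - s` (`one_add_abs_log_le`).
-/

open MeasureTheory Set

/-- Convexity of `Γ` makes `Γ'` monotone, so `|Γ'|` is controlled by its values at the endpoints and
continuity of `Γ'` is not needed. -/
lemma exists_Gamma_bounds {a b : ℝ} (ha : 0 < a) (hab : a ≤ b) :
    ∃ g G : ℝ, 0 < g ∧ 0 ≤ G ∧ ∀ x ∈ Icc a b, g ≤ Real.Gamma x ∧ |deriv Real.Gamma x| ≤ G := by
  have hdiff : ∀ x : ℝ, 0 < x → DifferentiableAt ℝ Real.Gamma x := fun x hx =>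
    Real.differentiableAt_Gamma fun m => by
      have : (0 : ℝ) ≤ m := m.cast_nonneg
      linarith
  have hcont : ContinuousOn Real.Gamma (Icc a b) := fun x hx =>
    (hdiff x (ha.trans_le hx.1)).continuousAt.continuousWithinAt
  obtain ⟨x₀, hx₀, hmin⟩ := isCompact_Icc.exists_isMinOn (nonempty_Icc.2 hab) hcont
  have hmono : MonotoneOn (deriv Real.Gamma) (Ioi 0) :=
    Real.convexOn_Gamma.monotoneOn_deriv fun x hx => hdiff x hx
  refine ⟨Real.Gamma x₀, max |deriv Real.Gamma a| |deriv Real.Gamma b|,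
    Real.Gamma_pos_of_pos (ha.trans_le hx₀.1), by positivity, fun x hx => ⟨hmin hx, ?_⟩⟩
  have hx0 : x ∈ Ioi (0 : ℝ) := ha.trans_le hx.1
  exact abs_le_max_abs_abs (hmono ha hx0 hx.1) (hmono hx0 (ha.trans_le hab) hx.2)

lemma one_add_abs_log_le {T ε x : ℝ} (hε : 0 < ε) (hx : 0 < x) (hxT : x ≤ T) :
    1 + |Real.log x| ≤ (T ^ ε + (T ^ ε * T ^ ε + 1) / ε) * x ^ (-ε) := by
  have hp : 0 < x ^ ε := Real.rpow_pos_of_pos hx ε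
  have hq : 0 < x ^ (-ε) := Real.rpow_pos_of_pos hx (-ε)
  have hpq : x ^ ε * x ^ (-ε) = 1 := by rw [← Real.rpow_add hx]; simp
  have hpT : x ^ ε ≤ T ^ ε := Real.rpow_le_rpow hx.le hxT hε.le
  have hTε : 0 < T ^ ε := hp.trans_le hpT
  have h1 : 1 ≤ T ^ ε * x ^ (-ε) := by
    rw [← hpq]; gcongr
  have h2 : x ^ ε ≤ T ^ ε * T ^ ε * x ^ (-ε) := by
    calc x ^ ε = x ^ ε * 1 := by ring
      _ ≤ T ^ ε * (T ^ ε * x ^ (-ε)) := by gcongr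
      _ = _ := by ring
  have hl1 : Real.log x ≤ x ^ ε / ε := Real.log_le_rpow_div hx.le hε
  have hl2 : -Real.log x ≤ x ^ (-ε) / ε := by
    have := Real.log_le_rpow_div (inv_pos.2 hx).le hε
    rwa [Real.log_inv, Real.inv_rpow hx.le, ← Real.rpow_neg hx.le] at this
  have hlog : |Real.log x| ≤ (x ^ ε + x ^ (-ε)) / ε := by
    rw [add_div]
    have h3 : 0 < x ^ ε / ε := by positivity
    have h4 : 0 < x ^ (-ε) / ε := by positivity
    exact abs_le.2 ⟨by linarith, by linarith⟩
  calc 1 + |Real.log x| ≤ T ^ ε * x ^ (-ε) + (T ^ ε * T ^ ε * x ^ (-ε) + x ^ (-ε)) / ε :=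
        add_le_add h1 (hlog.trans (by gcongr))
    _ = _ := by ring

lemma hasDerivWithinAt_kernel {α : ℝ → ℝ} {S : Set ℝ} {t s a' : ℝ} (hst : s < t)
    (hα : HasDerivWithinAt α a' S s) (hpos : 0 < 1 + α t - α s) :
    HasDerivWithinAt (fun σ => (t - σ) ^ (α t - α σ) / Real.Gamma (1 + α t - α σ))
      ((t - s) ^ (α t - α s) / Real.Gamma (1 + α t - α s) *
        (a' * deriv Real.Gamma (1 + α t - α s) / Real.Gamma (1 + α t - α s)
          - a' * Real.log (t - s) - (α t - α s) / (t - s))) S s := by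
  have hts : 0 < t - s := sub_pos.2 hst
  have hbase : HasDerivWithinAt (fun σ => t - σ) (-1) S s :=
    (hasDerivWithinAt_id s S).const_sub t
  have hpow := hbase.rpow (hα.const_sub (α t)) hts
  have hG : DifferentiableAt ℝ Real.Gamma (1 + α t - α s) :=
    Real.differentiableAt_Gamma fun m => by
      have : (0 : ℝ) ≤ m := m.cast_nonneg
      linarith
  have hGam := hG.hasDerivAt.comp_hasDerivWithinAt s (hα.const_sub (1 + α t))
  have hne : Real.Gamma (1 + α t - α s) ≠ 0 := (Real.Gamma_pos_of_pos hpos).ne'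
  refine (hpow.div hGam hne).congr_deriv ?_
  rw [Real.rpow_sub_one hts.ne']
  simp only [Function.comp]
  field_simp
  ring

/-- The power `(t - s) ^ δ` stays bounded when `|δ| ≤ M (t - s)`, as `x log x` is bounded. -/
lemma exists_rpow_bound {T M : ℝ} (hM : 0 ≤ M) :
    ∃ C : ℝ, 0 < C ∧ ∀ x δ : ℝ, 0 < x → x ≤ T → |δ| ≤ M * x → x ^ δ ≤ C := by
  obtain ⟨B, hB⟩ := (isCompact_Icc (a := (0 : ℝ)) (b := T)).exists_bound_of_continuousOn
    Real.continuous_mul_log.continuousOn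
  refine ⟨Real.exp (M * B), Real.exp_pos _, fun x δ hx hxT hδ => ?_⟩
  have hxB : |x * Real.log x| ≤ B := hB x ⟨hx.le, hxT⟩
  rw [abs_mul, abs_of_pos hx] at hxB
  rw [Real.rpow_def_of_pos hx]
  refine Real.exp_le_exp.2 ?_
  calc Real.log x * δ ≤ |Real.log x * δ| := le_abs_self _
    _ = |Real.log x| * |δ| := abs_mul _ _
    _ ≤ |Real.log x| * (M * x) := by gcongr
    _ = M * (x * |Real.log x|) := by ring
    _ ≤ M * B := by gcongr

lemma AssumptionA.mem_Icc {T αstar L : ℝ} {α : ℝ → ℝ} {f : ℝ → ℝ → ℝ}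
    (hA : AssumptionA T α f αstar L) {s : ℝ} (hs : s ∈ Icc 0 T) : α s ∈ Icc αstar 1 := by
  -- The bounds are assumed on `(0, T]` only; they extend to `s = 0` by continuity.
  have hcl : closure (Ioc 0 T) = Icc 0 T := closure_Ioc hA.hT.ne
  have hcont : ContinuousOn α (closure (Ioc 0 T)) := hcl ▸ hA.hα_smooth.continuousOn
  have hmaps : MapsTo α (Ioc 0 T) (Icc αstar 1) := fun t ht =>
    ⟨hA.hα_lb t ht, (hA.hα_ub t ht).le⟩
  have := hmaps.closure_of_continuousOn hcont
  rw [hcl, isClosed_Icc.closure_eq] at this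
  exact this hs

/-- The kernel `K(t,s) = (t-s)^{α(t)-α(s)} / Γ(1+α(t)-α(s))`: formula for `∂_s K`,
the bound `|∂_s K(t,s)| ≤ Q(1+|ln(t-s)|)`, and consequently
`|∂_s K(t,s)| ≤ Q_ε (t-s)^{-ε}` for every `0 < ε < 1`. -/
theorem kernel_deriv_formula_and_bounds
    (T αstar L : ℝ) (α : ℝ → ℝ) (f : ℝ → ℝ → ℝ)
    (hA : AssumptionA T α f αstar L)
    (K : ℝ → ℝ → ℝ)
    (hK : K = fun t s => (t - s) ^ (α t - α s) / Real.Gamma (1 + α t - α s)) :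
    (∀ t s : ℝ, 0 ≤ s → s < t → t ≤ T →
      derivWithin (fun σ => K t σ) (Set.Ico 0 t) s
        = K t s *
          (derivWithin α (Set.Icc 0 T) s * deriv Real.Gamma (1 + α t - α s)
              / Real.Gamma (1 + α t - α s)
            - derivWithin α (Set.Icc 0 T) s * Real.log (t - s)
            - (α t - α s) / (t - s))) ∧
    (∃ Q : ℝ, 0 < Q ∧ ∀ t s : ℝ, 0 ≤ s → s < t → t ≤ T →
      |derivWithin (fun σ => K t σ) (Set.Ico 0 t) s| ≤ Q * (1 + |Real.log (t - s)|)) ∧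
    (∀ ε : ℝ, 0 < ε → ε < 1 → ∃ Qε : ℝ, 0 < Qε ∧ ∀ t s : ℝ, 0 ≤ s → s < t → t ≤ T →
      |derivWithin (fun σ => K t σ) (Set.Ico 0 t) s| ≤ Qε * (t - s) ^ (-ε)) := by
  subst hK
  have hdiff : DifferentiableOn ℝ α (Icc 0 T) := hA.hα_smooth.differentiableOn (by norm_num)
  have hrange : ∀ t s : ℝ, 0 ≤ s → s < t → t ≤ T → 1 + α t - α s ∈ Icc αstar 2 := by
    intro t s hs hst htT
    have h1 := hA.mem_Icc (s := s) ⟨hs, by linarith⟩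
    have h2 := hA.mem_Icc (s := t) ⟨by linarith, htT⟩
    have h3 := hA.hαstar_pos
    exact ⟨by linarith [h1.2, h2.1], by linarith [h1.1, h2.2]⟩
  have hformula : ∀ t s : ℝ, 0 ≤ s → s < t → t ≤ T →
      derivWithin (fun σ => (t - σ) ^ (α t - α σ) / Real.Gamma (1 + α t - α σ)) (Ico 0 t) s
        = (t - s) ^ (α t - α s) / Real.Gamma (1 + α t - α s) *
          (derivWithin α (Icc 0 T) s * deriv Real.Gamma (1 + α t - α s)
              / Real.Gamma (1 + α t - α s)
            - derivWithin α (Icc 0 T) s * Real.log (t - s)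
            - (α t - α s) / (t - s)) := by
    intro t s hs hst htT
    have hα := ((hdiff s ⟨hs, by linarith⟩).hasDerivWithinAt).mono
      (fun x (hx : x ∈ Ico 0 t) => (⟨hx.1, by linarith [hx.2]⟩ : x ∈ Icc 0 T))
    exact (hasDerivWithinAt_kernel hst hα
      (hA.hαstar_pos.trans_le (hrange t s hs hst htT).1)).derivWithin
      (uniqueDiffOn_Ico 0 t s ⟨hs, hst⟩)
  have hbound : ∃ Q : ℝ, 0 < Q ∧ ∀ t s : ℝ, 0 ≤ s → s < t → t ≤ T →
      |derivWithin (fun σ => (t - σ) ^ (α t - α σ) / Real.Gamma (1 + α t - α σ)) (Ico 0 t) s|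
        ≤ Q * (1 + |Real.log (t - s)|) := by
    obtain ⟨M, hM⟩ := isCompact_Icc.exists_bound_of_continuousOn
      (hA.hα_smooth.continuousOn_derivWithin (uniqueDiffOn_Icc hA.hT) (by norm_num))
    have hM0 : 0 ≤ M := (norm_nonneg _).trans (hM 0 ⟨le_rfl, hA.hT.le⟩)
    obtain ⟨g, G, hg, hG0, hgG⟩ := exists_Gamma_bounds hA.hαstar_pos
      (hA.hαstar_lt_one.le.trans one_le_two)
    obtain ⟨C, hC, hCb⟩ := exists_rpow_bound (T := T) hM0
    -- `C / g` bounds the kernel; the bracket is at most `M G / g + M |log (t - s)| + M`, and the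
    -- final `+ 1` only serves to make the constant positive.
    refine ⟨C / g * (M * G / g + M + 1), by positivity, fun t s hs hst htT => ?_⟩
    have hts : 0 < t - s := sub_pos.2 hst
    rw [hformula t s hs hst htT]
    obtain ⟨hΓ, hΓ'⟩ := hgG _ (hrange t s hs hst htT)
    have ha := hM s ⟨hs, by linarith⟩
    have hlip : |α t - α s| ≤ M * (t - s) := by
      have := (convex_Icc 0 T).norm_image_sub_le_of_norm_derivWithin_le hdiff hM
        (⟨hs, by linarith⟩ : s ∈ Icc 0 T) (⟨by linarith, htT⟩ : t ∈ Icc 0 T)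
      rwa [Real.norm_eq_abs, Real.norm_eq_abs, abs_of_pos hts] at this
    rw [Real.norm_eq_abs] at ha
    have hpw := hCb (t - s) (α t - α s) hts (by linarith) hlip
    generalize 1 + α t - α s = y at *
    generalize derivWithin α (Icc 0 T) s = a at *
    have hΓ0 : 0 < Real.Gamma y := hg.trans_le hΓ
    have hK : |(t - s) ^ (α t - α s) / Real.Gamma y| ≤ C / g := by
      rw [abs_of_nonneg (by positivity)]
      gcongr
    have h1 : |a * deriv Real.Gamma y / Real.Gamma y| ≤ M * G / g := by
      rw [abs_div, abs_mul, abs_of_pos hΓ0]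
      gcongr
    have h2 : |a * Real.log (t - s)| ≤ M * |Real.log (t - s)| := by
      rw [abs_mul]
      gcongr
    have h3 : |(α t - α s) / (t - s)| ≤ M := by
      rwa [abs_div, abs_of_pos hts, div_le_iff₀ hts]
    rw [abs_mul, mul_assoc]
    refine mul_le_mul hK ?_ (abs_nonneg _) (by positivity)
    have h4 : 0 ≤ (M * G / g + 1) * |Real.log (t - s)| := by positivity
    calc _ ≤ |a * deriv Real.Gamma y / Real.Gamma y| + |a * Real.log (t - s)|
            + |(α t - α s) / (t - s)| :=
          (abs_sub _ _).trans (add_le_add_left (abs_sub _ _) _)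
      _ ≤ (M * G / g + M + 1) * (1 + |Real.log (t - s)|) := by linarith
  refine ⟨hformula, hbound, fun ε hε _ => ?_⟩
  obtain ⟨Q, hQ, hQb⟩ := hbound
  have hTε : 0 < T ^ ε := Real.rpow_pos_of_pos hA.hT ε
  refine ⟨Q * (T ^ ε + (T ^ ε * T ^ ε + 1) / ε), by positivity, fun t s hs hst htT => ?_⟩
  refine (hQb t s hs hst htT).trans ?_
  rw [mul_assoc]
  exact mul_le_mul_of_nonneg_left
    (one_add_abs_log_le hε (sub_pos.2 hst) (by linarith)) hQ.le
end

section
/- (Reduction to a second-kind Volterra integral equation) Suppose Assumption A holds and u ∈ C[0,T] ∩ C¹(0,T] satisfies the Cauchy problem ₀D_t^{α(t)} u(t) = f(u(t),t) for t ∈ (0,T] with u(0) = u₀, and |u'(t)| ≤ Q·t^{α(0)-1} on (0,T] for some Q > 0. Then u satisfies, for every t ∈ (0,T], the second-kind Volterra integral equation u(t) − ∫₀^t ∂_s K(t,s)·u(s) ds − u₀·t^{α(t)-α(0)}/Γ(1+α(t)-α(0)) = (1/Γ(α(t)))·∫₀^t f(u(s),s)/(t-s)^{1-α(t)} ds, where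 K(t,s) := (t-s)^{α(t)-α(s)}/Γ(1+α(t)-α(s)). -/
/-!
Fix `t`, write `a = α t`, and let `K(s) = (t - s) ^ (a - α s) / Γ (1 + a - α s)`. Inserting the
differential equation into the right-hand side and exchanging the order of integration leaves, for
each `y`, the Beta integral `∫_y^t (t - s) ^ (a - 1) (s - y) ^ (-α y) ds`
(`integral_beta_shift`), so the right-hand side equals `∫₀ᵗ K(s) u'(s) ds` (`volterra_fubini`). The
exchange is legitimate since `K` is continuous on `[0, t]` and `u'` is integrable, being dominated
by a multiple of `s ^ (α 0 - 1)` with `α 0 > 0`.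

Integrating by parts moves the derivative onto `K`. The boundary values are `K(t) = 1` and
`K(0) = t ^ (a - α 0) / Γ (1 + a - α 0)`. The only delicate point is the behaviour of `K` near
`s = t`: since `α` is continuously differentiable, `a - α s = O(t - s)`, so `K` is continuous up to
`t` (`continuousOn_sub_rpow`) and `K'` has at most a logarithmic singularity
(`intervalIntegrable_kernelDeriv`). Smoothness of `1 / Γ` comes from the entire function on `ℂ`.
-/

open MeasureTheory Set

/-- `u ∈ C[0,T] ∩ C¹(0,T]` solves the variable-order Caputo Cauchy problem
`₀D_t^{α(t)} u = f(u(t),t)` on `(0,T]`, `u(0) = u₀`. -/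
def IsSolution (T : ℝ) (α : ℝ → ℝ) (f : ℝ → ℝ → ℝ) (u₀ : ℝ) (u : ℝ → ℝ) : Prop :=
  u 0 = u₀ ∧ ContinuousOn u (Set.Icc 0 T) ∧
  (∀ t ∈ Set.Ioc 0 T, DifferentiableAt ℝ u t) ∧
  ContinuousOn (deriv u) (Set.Ioc 0 T) ∧
  ∀ t ∈ Set.Ioc 0 T,
    (∫ s in (0:ℝ)..t, deriv u s / (Real.Gamma (1 - α s) * (t - s) ^ α s)) = f (u t) t

/-! ### The Beta integral and the exchange of integrals -/

/-- The reciprocal Gamma function `1 / Γ`, written as an inverse so that it agrees with the restriction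
to `ℝ` of the entire function `1 / Γ` (with value `0` at the poles of `Γ`). -/
noncomputable def rGamma (x : ℝ) : ℝ := (Real.Gamma x)⁻¹

lemma contDiff_rGamma : ContDiff ℝ 1 rGamma := by
  have h : ContDiff ℝ 1 (fun s : ℂ => (Complex.Gamma s)⁻¹) :=
    (Complex.differentiable_one_div_Gamma.contDiff (n := 1)).restrict_scalars ℝ
  have h2 : rGamma = fun x : ℝ => Complex.reCLM ((Complex.Gamma (Complex.ofRealCLM x))⁻¹) := by
    funext x
    simp [rGamma, Complex.Gamma_ofReal, ← Complex.ofReal_inv]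
  rw [h2]
  exact Complex.reCLM.contDiff.comp (h.comp Complex.ofRealCLM.contDiff)

lemma integral_beta_scaled {a b c : ℝ} (ha : 0 < a) (hb : 0 < b) (hc : 0 < c) :
    ∫ x in (0:ℝ)..c, x ^ (a - 1) * (c - x) ^ (b - 1)
      = c ^ (a + b - 1) * (Real.Gamma a * Real.Gamma b * rGamma (a + b)) := by
  have h := Complex.betaIntegral_scaled a b hc
  rw [Complex.betaIntegral_eq_Gamma_mul_div _ _ (by simpa) (by simpa)] at h
  have h1 : ∫ x in (0:ℝ)..c, (x : ℂ) ^ ((a:ℂ) - 1) * ((c : ℂ) - x) ^ ((b:ℂ) - 1)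
      = ∫ x in (0:ℝ)..c, ((x ^ (a - 1) * (c - x) ^ (b - 1) : ℝ) : ℂ) := by
    apply intervalIntegral.integral_congr
    intro x hx
    rw [uIcc_of_le hc.le] at hx
    have h2 : 0 ≤ c - x := by linarith [hx.2]
    simp only
    push_cast [Complex.ofReal_cpow hx.1, Complex.ofReal_cpow h2]
    rfl
  rw [h1, intervalIntegral.integral_ofReal] at h
  apply Complex.ofReal_injective
  rw [h, rGamma, ← Complex.ofReal_add, Complex.Gamma_ofReal, Complex.Gamma_ofReal,
    Complex.Gamma_ofReal]
  push_cast [Complex.ofReal_cpow hc.le]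
  ring

/-- The Beta integral on `[y, t]`: composing a weakly singular kernel of exponent `a - 1` with one of
exponent `-b` yields `(t - y) ^ (a - b)` times Gamma factors. -/
lemma integral_beta_shift {a b y t : ℝ} (ha : 0 < a) (hb : b < 1) (hy : y < t) :
    ∫ s in Ioo y t, (t - s) ^ (a - 1) * (s - y) ^ (-b)
      = (t - y) ^ (a - b) * (Real.Gamma a * Real.Gamma (1 - b) * rGamma (1 + a - b)) := by
  have h := integral_beta_scaled (a := 1 - b) (b := a) (c := t - y) (by linarith) ha (by linarith)
  rw [← integral_Ioc_eq_integral_Ioo, ← intervalIntegral.integral_of_le hy.le]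
  have h2 := intervalIntegral.integral_comp_sub_right (a := y) (b := t)
    (fun x : ℝ => x ^ (1 - b - 1) * (t - y - x) ^ (a - 1)) y
  rw [sub_self, h] at h2
  rw [show a - b = 1 - b + a - 1 by ring, show 1 + a - b = 1 - b + a by ring,
    mul_comm (Real.Gamma a), ← h2]
  apply intervalIntegral.integral_congr
  intro s _
  simp only
  rw [mul_comm]
  congr 2 <;> ring

lemma rGamma_pos {x : ℝ} (hx : 0 < x) : 0 < rGamma x := inv_pos.2 (Real.Gamma_pos_of_pos hx)

/-- Composing the fractional integral of order `a` with the variable-order integral of `v` gives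
`∫ v K`. The two integrals are exchanged on the triangle `0 < y < s < t`; absolute integrability
there is read off the inner Beta integral, which is evaluated exactly. -/
lemma volterra_fubini {t a : ℝ} {α v : ℝ → ℝ} (ha : 0 < a)
    (hα : ContinuousOn α (Ioo 0 t)) (hα1 : ∀ y ∈ Ioo 0 t, α y < 1)
    (hv : ContinuousOn v (Ioo 0 t))
    (hint : IntegrableOn (fun y => v y * ((t - y) ^ (a - α y) * rGamma (1 + a - α y)))
      (Ioo 0 t)) :
    ∫ s in Ioo 0 t, (t - s) ^ (a - 1) * ∫ y in Ioo 0 s, (s - y) ^ (-α y) * (v y * rGamma (1 - α y))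
      = Real.Gamma a * ∫ y in Ioo 0 t, v y * ((t - y) ^ (a - α y) * rGamma (1 + a - α y)) := by
  set S : Set (ℝ × ℝ) := {p | 0 < p.2 ∧ p.2 < p.1 ∧ p.1 < t} with hS
  set H : ℝ × ℝ → ℝ := fun p =>
    (t - p.1) ^ (a - 1) * (p.1 - p.2) ^ (-α p.2) * (v p.2 * rGamma (1 - α p.2)) with hH
  have hSm : MeasurableSet S := by
    apply IsOpen.measurableSet
    exact (isOpen_lt continuous_const continuous_snd).inter
      ((isOpen_lt continuous_snd continuous_fst).inter (isOpen_lt continuous_fst continuous_const))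
  have hmap : MapsTo Prod.snd S (Ioo 0 t) := fun p hp => ⟨hp.1, hp.2.1.trans hp.2.2⟩
  have hα2 : ContinuousOn (fun p : ℝ × ℝ => α p.2) S := hα.comp continuousOn_snd hmap
  have hv2 : ContinuousOn (fun p : ℝ × ℝ => v p.2) S := hv.comp continuousOn_snd hmap
  have hHc : ContinuousOn H S := by
    refine ContinuousOn.mul (ContinuousOn.mul ?_ ?_) (hv2.mul ?_)
    · exact (by fun_prop : ContinuousOn (fun p : ℝ × ℝ => t - p.1) S).rpow_const
        fun p hp => Or.inl (by have := hp.2.2; linarith)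
    · exact (by fun_prop : ContinuousOn (fun p : ℝ × ℝ => p.1 - p.2) S).rpow hα2.neg
        fun p hp => Or.inl (by have := hp.2.1; linarith)
    · exact contDiff_rGamma.continuous.comp_continuousOn (continuousOn_const.sub hα2)
  have hFm : AEStronglyMeasurable (S.indicator H) (volume.prod volume) :=
    (aestronglyMeasurable_indicator_iff hSm).2 (hHc.aestronglyMeasurable hSm)
  have hsec : ∀ y ∈ Ioo 0 t, (fun s => S.indicator H (s, y)) = (Ioo y t).indicator
      (fun s => (t - s) ^ (a - 1) * (s - y) ^ (-α y) * (v y * rGamma (1 - α y))) := by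
    intro y hy
    funext s
    simp only [indicator, hS, hH, mem_ofPred_eq, mem_Ioo, hy.1, true_and]
  have hsec0 : ∀ y ∉ Ioo 0 t, (fun s => S.indicator H (s, y)) = 0 := by
    intro y hy
    funext s
    apply indicator_of_notMem
    exact fun h => hy ⟨h.1, h.2.1.trans h.2.2⟩
  have hG : ∀ y ∈ Ioo 0 t, Real.Gamma (1 - α y) * rGamma (1 - α y) = 1 := fun y hy =>
    mul_inv_cancel₀ (Real.Gamma_pos_of_pos (by linarith [hα1 y hy])).ne'
  have hbint : ∀ y ∈ Ioo 0 t,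
      IntegrableOn (fun s => (t - s) ^ (a - 1) * (s - y) ^ (-α y)) (Ioo y t) := by
    intro y hy
    -- the Beta integral is positive, so its integrand cannot fail to be integrable
    apply Integrable.of_integral_ne_zero
    rw [integral_beta_shift ha (hα1 y hy) hy.2]
    have h1 := hα1 y hy
    have h2 : 0 < t - y := by linarith [hy.2]
    have h3 := Real.Gamma_pos_of_pos ha
    have h4 : 0 < Real.Gamma (1 - α y) := Real.Gamma_pos_of_pos (by linarith)
    have h5 : 0 < rGamma (1 + a - α y) := rGamma_pos (by linarith)
    positivity
  have hin : ∀ y, ∫ s, S.indicator H (s, y) = (Ioo 0 t).indicator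
      (fun y => Real.Gamma a * (v y * ((t - y) ^ (a - α y) * rGamma (1 + a - α y)))) y := by
    intro y
    by_cases hy : y ∈ Ioo 0 t
    · rw [hsec y hy, integral_indicator measurableSet_Ioo, integral_mul_const,
        integral_beta_shift ha (hα1 y hy) hy.2, indicator_of_mem hy]
      linear_combination Real.Gamma a * (v y * ((t - y) ^ (a - α y) * rGamma (1 + a - α y)))
        * hG y hy
    · rw [hsec0 y hy, indicator_of_notMem hy]; simp
  have hnorm : ∀ y, ∫ s, ‖S.indicator H (s, y)‖ = (Ioo 0 t).indicator
      (fun y => Real.Gamma a * ‖v y * ((t - y) ^ (a - α y) * rGamma (1 + a - α y))‖) y := by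
    intro y
    by_cases hy : y ∈ Ioo 0 t
    · have e : (fun s => ‖S.indicator H (s, y)‖) = (Ioo y t).indicator
          (fun s => (t - s) ^ (a - 1) * (s - y) ^ (-α y) * (|v y| * rGamma (1 - α y))) := by
        funext s
        rw [show S.indicator H (s, y) = _ from congrFun (hsec y hy) s,
          norm_indicator_eq_indicator_norm]
        refine indicator_congr (s := Ioo y t) (fun s hs => ?_) |> fun h => congrFun h s
        have h1 : 0 < t - s := by linarith [hs.2]
        have h2 : 0 < s - y := by linarith [hs.1]
        rw [Real.norm_eq_abs, abs_mul, abs_mul (v y), abs_of_pos (rGamma_pos (by linarith [hα1 y hy])),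
          abs_of_pos (by positivity)]
      have h2 : 0 < t - y := by linarith [hy.2]
      rw [e, integral_indicator measurableSet_Ioo, integral_mul_const,
        integral_beta_shift ha (hα1 y hy) hy.2, indicator_of_mem hy, norm_mul, Real.norm_eq_abs,
        Real.norm_of_nonneg (mul_nonneg (by positivity)
          (rGamma_pos (by linarith [hα1 y hy])).le)]
      linear_combination Real.Gamma a * (|v y| * ((t - y) ^ (a - α y) * rGamma (1 + a - α y)))
        * hG y hy
    · have e : (fun s => ‖S.indicator H (s, y)‖) = 0 := by
        funext s
        rw [show S.indicator H (s, y) = _ from congrFun (hsec0 y hy) s]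
        simp
      rw [e, indicator_of_notMem hy]; simp
  have hFi : Integrable (S.indicator H) (volume.prod volume) := by
    rw [integrable_prod_iff' hFm]
    refine ⟨Filter.Eventually.of_forall fun y => ?_, ?_⟩
    · by_cases hy : y ∈ Ioo 0 t
      · rw [hsec y hy, integrable_indicator_iff measurableSet_Ioo]
        exact (hbint y hy).mul_const _
      · rw [hsec0 y hy]; exact integrable_zero _ _ _
    · simp_rw [hnorm]
      rw [integrable_indicator_iff measurableSet_Ioo]
      exact hint.norm.const_mul _
  have hswap := integral_integral_swap (f := fun s y => S.indicator H (s, y)) hFi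
  simp_rw [hin] at hswap
  rw [integral_indicator measurableSet_Ioo, integral_const_mul] at hswap
  rw [← hswap, ← integral_indicator measurableSet_Ioo]
  congr 1
  funext s
  by_cases hs : s ∈ Ioo 0 t
  · rw [indicator_of_mem hs, ← integral_const_mul, ← integral_indicator measurableSet_Ioo]
    congr 1
    funext y
    simp only [indicator, hS, hH, mem_ofPred_eq, mem_Ioo, hs.2, and_true, mul_assoc]
  · rw [indicator_of_notMem hs]
    have e : (fun y => S.indicator H (s, y)) = 0 := by
      funext y
      apply indicator_of_notMem
      exact fun h => hs ⟨h.1.trans h.2.1, h.2.2⟩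
    rw [e]; simp

/-! ### The kernel near the diagonal -/

/-- The derivative of `s ↦ (t - s) ^ β s / Γ (1 + β s)`, where `β'` stands for the derivative of `β`.
For the kernel `K(t, s)` of the Volterra equation, `β s = α t - α s`. The summands are split
according to their singularity at `s = t`: bounded, logarithmic and continuous. -/
noncomputable def kernelDeriv (t : ℝ) (β β' : ℝ → ℝ) (s : ℝ) : ℝ :=
  (t - s) ^ β s * rGamma (1 + β s) * (-(β s / (t - s)))
    + (t - s) ^ β s * rGamma (1 + β s) * β' s * Real.log (t - s)
    + (t - s) ^ β s * (deriv rGamma (1 + β s) * β' s)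

lemma exists_lipschitz_bound {t : ℝ} {β β' : ℝ → ℝ} (ht : 0 < t)
    (hβ : ∀ s ∈ Icc 0 t, HasDerivWithinAt β (β' s) (Icc 0 t) s)
    (hβ' : ContinuousOn β' (Icc 0 t)) (hβt : β t = 0) :
    ∃ M, ∀ s ∈ Icc 0 t, |β s| ≤ M * (t - s) := by
  obtain ⟨M, hM⟩ := isCompact_Icc.exists_bound_of_continuousOn hβ'
  refine ⟨M, fun s hs => ?_⟩
  have h := (convex_Icc 0 t).norm_image_sub_le_of_norm_hasDerivWithin_le hβ hM
    (right_mem_Icc.2 ht.le) hs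
  rwa [hβt, sub_zero, Real.norm_eq_abs, Real.norm_eq_abs, abs_sub_comm,
    abs_of_nonneg (sub_nonneg.2 hs.2)] at h

/-- Continuity holds up to `s = t`, where the value is `0 ^ 0 = 1`, because `β s = O(t - s)` makes
`β s * log (t - s)` tend to `0`. -/
lemma continuousOn_sub_rpow {t : ℝ} {β β' : ℝ → ℝ} (ht : 0 < t)
    (hβ : ∀ s ∈ Icc 0 t, HasDerivWithinAt β (β' s) (Icc 0 t) s)
    (hβ' : ContinuousOn β' (Icc 0 t)) (hβt : β t = 0) :
    ContinuousOn (fun s => (t - s) ^ β s) (Icc 0 t) := by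
  obtain ⟨M, hM⟩ := exists_lipschitz_bound ht hβ hβ' hβt
  have hexp : EqOn (fun s => (t - s) ^ β s) (fun s => Real.exp (Real.log (t - s) * β s))
      (Icc 0 t) := by
    intro s hs
    rcases hs.2.eq_or_lt with rfl | h
    · simp [hβt]
    · exact Real.rpow_def_of_pos (by linarith) _
  refine ContinuousOn.congr (Real.continuous_exp.comp_continuousOn ?_) hexp
  intro s hs
  rcases hs.2.eq_or_lt with rfl | h
  · have h0 : Filter.Tendsto (fun x => M * |(s - x) * Real.log (s - x)|)
        (nhdsWithin s (Icc 0 s)) (nhds 0) := by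
      have : Continuous (fun x => M * |(s - x) * Real.log (s - x)|) :=
        continuous_const.mul (Real.continuous_mul_log.comp (by fun_prop : Continuous
          (fun x : ℝ => s - x))).abs
      simpa using (this.tendsto s).mono_left nhdsWithin_le_nhds
    unfold ContinuousWithinAt
    simp only [hβt, mul_zero]
    refine squeeze_zero_norm' ?_ h0
    filter_upwards [self_mem_nhdsWithin] with x hx
    have h1 : |s - x| = s - x := abs_of_nonneg (by linarith [hx.2])
    rw [Real.norm_eq_abs, abs_mul, abs_mul, h1]
    nlinarith [hM x hx, abs_nonneg (Real.log (s - x))]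
  · refine ContinuousWithinAt.mul ?_ (hβ s hs).continuousWithinAt
    exact (by fun_prop : ContinuousWithinAt (fun x : ℝ => t - x) (Icc 0 t) s).log (by linarith)

lemma hasDerivAt_kernel {t s : ℝ} {β β' : ℝ → ℝ} (hs : s < t) (hβ : HasDerivAt β (β' s) s) :
    HasDerivAt (fun σ => (t - σ) ^ β σ * rGamma (1 + β σ)) (kernelDeriv t β β' s) s := by
  have hpos : 0 < t - s := by linarith
  have h1 := ((hasDerivAt_id s).const_sub t).rpow hβ hpos
  have hg : HasDerivAt rGamma (deriv rGamma (1 + β s)) (1 + β s) :=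
    (contDiff_rGamma.differentiable (by norm_num) _).hasDerivAt
  have h2 := hg.comp s (hβ.const_add 1)
  refine (h1.mul h2).congr_deriv ?_
  simp only [id, Function.comp, kernelDeriv]
  rw [Real.rpow_sub_one hpos.ne']
  ring

lemma intervalIntegrable_kernelDeriv {t : ℝ} {β β' : ℝ → ℝ} (ht : 0 < t)
    (hβ : ∀ s ∈ Icc 0 t, HasDerivWithinAt β (β' s) (Icc 0 t) s)
    (hβ' : ContinuousOn β' (Icc 0 t)) (hβt : β t = 0) :
    IntervalIntegrable (kernelDeriv t β β') volume 0 t := by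
  obtain ⟨M, hM⟩ := exists_lipschitz_bound ht hβ hβ' hβt
  have hP := continuousOn_sub_rpow ht hβ hβ' hβt
  have hβc : ContinuousOn β (Icc 0 t) := fun s hs => (hβ s hs).continuousWithinAt
  have hβ1 : ContinuousOn (fun s => 1 + β s) (Icc 0 t) := continuousOn_const.add hβc
  have hg := contDiff_rGamma.continuous.comp_continuousOn hβ1
  have hg' := (contDiff_rGamma.continuous_deriv le_rfl).comp_continuousOn hβ1
  have hq : IntervalIntegrable (fun s => -(β s / (t - s))) volume 0 t := by
    rw [intervalIntegrable_iff_integrableOn_Ioo_of_le ht.le]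
    refine IntegrableOn.of_bound (C := M) (by simp) ?_ ?_
    · refine ContinuousOn.aestronglyMeasurable ?_ measurableSet_Ioo
      exact ((hβc.mono Ioo_subset_Icc_self).div (by fun_prop)
        (fun s hs => by have := hs.2; intro h; linarith)).neg
    · filter_upwards [ae_restrict_mem measurableSet_Ioo] with s hs
      have h1 : 0 < t - s := by linarith [hs.2]
      rw [norm_neg, norm_div, Real.norm_eq_abs, Real.norm_eq_abs, abs_of_pos h1, div_le_iff₀ h1]
      exact hM s (Ioo_subset_Icc_self hs)
  have hlog : IntervalIntegrable (fun s => Real.log (t - s)) volume 0 t := by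
    simpa using (intervalIntegral.intervalIntegrable_log' (a := t) (b := 0)).comp_sub_left t
  rw [← uIcc_of_le ht.le] at hP hg hg' hβ'
  refine ((hq.continuousOn_mul (hP.mul hg)).add
    (hlog.continuousOn_mul ((hP.mul hg).mul hβ'))).add ?_
  exact (hP.mul (hg'.mul hβ')).intervalIntegrable

/-! ### Reduction to the Volterra equation -/

/-- Reduction to a second-kind Volterra integral equation: a solution `u` of the Cauchy
problem with `|u'(t)| ≤ Q t^{α(0)-1}` satisfies, for every `t ∈ (0,T]`,
`u(t) − ∫₀^t ∂_s K(t,s) u(s) ds − u₀ t^{α(t)-α(0)}/Γ(1+α(t)-α(0))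
  = (1/Γ(α(t))) ∫₀^t f(u(s),s)/(t-s)^{1-α(t)} ds`,
where `K(t,s) = (t-s)^{α(t)-α(s)}/Γ(1+α(t)-α(s))`. -/
theorem reduction_to_volterra
    (T αstar L u₀ Q : ℝ) (α : ℝ → ℝ) (f : ℝ → ℝ → ℝ) (u : ℝ → ℝ)
    (hA : AssumptionA T α f αstar L)
    (hu : IsSolution T α f u₀ u)
    (hQ : 0 < Q)
    (hu' : ∀ t ∈ Set.Ioc 0 T, |deriv u t| ≤ Q * t ^ (α 0 - 1)) :
    ∀ t ∈ Set.Ioc 0 T,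
      u t
        - (∫ s in (0:ℝ)..t,
            derivWithin (fun σ => (t - σ) ^ (α t - α σ) / Real.Gamma (1 + α t - α σ))
              (Set.Ico 0 t) s * u s)
        - u₀ * t ^ (α t - α 0) / Real.Gamma (1 + α t - α 0)
      = (1 / Real.Gamma (α t)) * ∫ s in (0:ℝ)..t, f (u s) s / (t - s) ^ (1 - α t) := by
  intro t ht
  obtain ⟨hu0, huc, hud, hudc, hueq⟩ := hu
  have ht0 : 0 < t := ht.1
  have hsub : Icc 0 t ⊆ Icc 0 T := Icc_subset_Icc_right ht.2
  have hsubo : Ioo 0 t ⊆ Ioc 0 T := fun s hs => ⟨hs.1, hs.2.le.trans ht.2⟩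
  have hαc : ContinuousOn α (Icc 0 T) := hA.hα_smooth.continuousOn
  have hat : 0 < α t := hA.hαstar_pos.trans_le (hA.hα_lb t ht)
  have hα0 : 0 < α 0 := by
    -- the lower bound `αstar` passes to the endpoint `0` by continuity
    have hcl : (0:ℝ) ∈ closure (Ioc 0 T) := by
      rw [closure_Ioc hA.hT.ne]; exact left_mem_Icc.2 hA.hT.le
    have h0 : ContinuousWithinAt α (Ioc 0 T) 0 :=
      (hαc 0 (left_mem_Icc.2 hA.hT.le)).mono Ioc_subset_Icc_self
    exact hA.hαstar_pos.trans_le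
      (ContinuousWithinAt.closure_le hcl continuousWithinAt_const h0 hA.hα_lb)
  set β : ℝ → ℝ := fun s => α t - α s with hβdef
  set β' : ℝ → ℝ := fun s => -derivWithin α (Icc 0 T) s with hβ'def
  have hβ : ∀ s ∈ Icc 0 t, HasDerivWithinAt β (β' s) (Icc 0 t) s := fun s hs =>
    (((hA.hα_smooth.differentiableOn (by norm_num) s (hsub hs)).hasDerivWithinAt.mono
      hsub).const_sub (α t))
  have hβ' : ContinuousOn β' (Icc 0 t) :=
    ((hA.hα_smooth.continuousOn_derivWithin (uniqueDiffOn_Icc hA.hT) (by norm_num)).mono hsub).neg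
  have hβt : β t = 0 := sub_self _
  have hβat : ∀ s ∈ Ioo 0 t, HasDerivAt β (β' s) s := fun s hs =>
    (hβ s (Ioo_subset_Icc_self hs)).hasDerivAt (Icc_mem_nhds hs.1 hs.2)
  have hβc : ContinuousOn β (Icc 0 t) := fun s hs => (hβ s hs).continuousWithinAt
  set k : ℝ → ℝ := fun s => (t - s) ^ β s * rGamma (1 + β s) with hk
  have hkc : ContinuousOn k (Icc 0 t) := (continuousOn_sub_rpow ht0 hβ hβ' hβt).mul
    (contDiff_rGamma.continuous.comp_continuousOn (continuousOn_const.add hβc))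
  have hkd : ∀ s ∈ Ioo 0 t, HasDerivAt k (kernelDeriv t β β' s) s := fun s hs =>
    hasDerivAt_kernel hs.2 (hβat s hs)
  have hki := intervalIntegrable_kernelDeriv ht0 hβ hβ' hβt
  have hkt : k t = 1 := by simp [hk, hβt, rGamma]
  have hkeq : (fun σ => (t - σ) ^ (α t - α σ) / Real.Gamma (1 + α t - α σ)) = k := by
    funext σ
    simp only [hk, hβdef, rGamma, div_eq_mul_inv, add_sub_assoc]
  have hui : IntervalIntegrable (deriv u) volume 0 t := by
    have h1 : IntervalIntegrable (fun s : ℝ => Q * s ^ (α 0 - 1)) volume 0 t :=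
      (intervalIntegral.intervalIntegrable_rpow' (by linarith)).const_mul Q
    rw [intervalIntegrable_iff_integrableOn_Ioo_of_le ht0.le] at h1 ⊢
    refine h1.mono' (measurable_deriv u).aestronglyMeasurable ?_
    filter_upwards [ae_restrict_mem measurableSet_Ioo] with s hs
    exact hu' s (hsubo hs)
  have hparts : ∫ s in (0:ℝ)..t, k s * deriv u s
      = u t - k 0 * u 0 - ∫ s in (0:ℝ)..t, kernelDeriv t β β' s * u s := by
    have := intervalIntegral.integral_mul_deriv_eq_deriv_mul_of_hasDerivAt
      (a := 0) (b := t) (u := k) (v := u) (u' := kernelDeriv t β β') (v' := deriv u)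
      (by rwa [uIcc_of_le ht0.le]) (by rw [uIcc_of_le ht0.le]; exact huc.mono hsub)
      (by rw [min_eq_left ht0.le, max_eq_right ht0.le]; exact hkd)
      (by
        rw [min_eq_left ht0.le, max_eq_right ht0.le]
        exact fun s hs => (hud s (hsubo hs)).hasDerivAt) hki hui
    rw [this, hkt, one_mul]
  have hfub := volterra_fubini (t := t) (a := α t) (α := α) (v := deriv u) hat
    (hαc.mono fun s hs => hsub (Ioo_subset_Icc_self hs))
    (fun y hy => hA.hα_ub y (hsubo hy)) (hudc.mono hsubo) (by
      have h := hui.mul_continuousOn (by rwa [uIcc_of_le ht0.le] : ContinuousOn k (uIcc 0 t))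
      rw [intervalIntegrable_iff_integrableOn_Ioo_of_le ht0.le] at h
      simpa only [hk, hβdef, add_sub_assoc] using h)
  have hrhs : ∫ s in (0:ℝ)..t, f (u s) s / (t - s) ^ (1 - α t)
      = Real.Gamma (α t) * ∫ s in (0:ℝ)..t, k s * deriv u s := by
    rw [intervalIntegral.integral_of_le ht0.le, intervalIntegral.integral_of_le ht0.le,
      integral_Ioc_eq_integral_Ioo, integral_Ioc_eq_integral_Ioo]
    have e : ∀ s, k s * deriv u s
        = deriv u s * ((t - s) ^ (α t - α s) * rGamma (1 + α t - α s)) := fun s => by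
      simp only [hk, hβdef, add_sub_assoc, mul_comm]
    simp_rw [e]
    rw [← hfub]
    refine setIntegral_congr_fun measurableSet_Ioo fun s hs => ?_
    have hs0 : 0 < t - s := by linarith [hs.2]
    rw [← hueq s (hsubo hs), intervalIntegral.integral_of_le hs.1.le,
      integral_Ioc_eq_integral_Ioo, div_eq_mul_inv, ← Real.rpow_neg hs0.le, neg_sub, mul_comm]
    congr 1
    refine setIntegral_congr_fun measurableSet_Ioo fun y hy => ?_
    have hy0 : 0 < s - y := by linarith [hy.2]
    simp only [rGamma]
    rw [Real.rpow_neg hy0.le, div_eq_mul_inv, mul_inv]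
    ring
  have hlhs : ∫ s in (0:ℝ)..t, derivWithin k (Ico 0 t) s * u s
      = ∫ s in (0:ℝ)..t, kernelDeriv t β β' s * u s := by
    rw [intervalIntegral.integral_of_le ht0.le, intervalIntegral.integral_of_le ht0.le,
      integral_Ioc_eq_integral_Ioo, integral_Ioc_eq_integral_Ioo]
    refine setIntegral_congr_fun measurableSet_Ioo fun s hs => ?_
    rw [derivWithin_of_mem_nhds (Ico_mem_nhds hs.1 hs.2), (hkd s hs).deriv]
  have hk0 : u₀ * t ^ (α t - α 0) / Real.Gamma (1 + α t - α 0) = k 0 * u 0 := by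
    rw [hu0, ← hkeq]
    simp only [sub_zero]
    ring
  rw [hkeq, hlhs, hrhs, hk0, hparts, ← mul_assoc, one_div,
    inv_mul_cancel₀ (Real.Gamma_pos_of_pos hat).ne']
  ring
end

section
/- (Kernel bound away from order one) Suppose Assumption A holds and additionally α(t) ≤ α** < 1 for all t ∈ [0,T] (some constant α** < 1), and let K(t,s) := (t−s)^{α(t)−α(s)}/Γ(1+α(t)−α(s)). Then there exists a constant Q > 0 such that |∂_s K(t,s)| ≤ Q·(t−s)^{α(t)−1} ≤ Q·(t−s)^{α*−1} for all 0 ≤ s < t ≤ T. -/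
open MeasureTheory Set

/-- The reciprocal of the Gamma function is `C¹` on all of `ℝ`, as the restriction of an
entire function. -/
lemma contDiff_inv_realGamma : ContDiff ℝ 1 (fun x : ℝ => (Real.Gamma x)⁻¹) := by
  have h : ContDiff ℂ 1 (fun z : ℂ => (Complex.Gamma z)⁻¹) :=
    Complex.differentiable_one_div_Gamma.contDiff
  rw [contDiff_iff_contDiffAt]
  intro x
  have := (h.contDiffAt (x := (x : ℂ))).real_of_complex
  refine this.congr_of_eventuallyEq (Filter.Eventually.of_forall fun y => ?_)
  simp only [Complex.Gamma_ofReal, ← Complex.ofReal_inv, Complex.ofReal_re]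

/-- A positive power of `u`, with exponent bounded away from `0`, absorbs `log u` uniformly
on `(0, R]`. -/
lemma rpow_mul_log_bound {R β P u p : ℝ} (hR : 1 ≤ R) (hβ : 0 < β) (hp : β ≤ p) (hP : p ≤ P)
    (hu : 0 < u) (huR : u ≤ R) :
    u ^ p * (|Real.log u| + 1) ≤ R ^ P * (R + 1) + 1 / β + 1 := by
  have hRP : 0 ≤ R ^ P := Real.rpow_nonneg (by linarith) _
  have hβ' : 0 < 1 / β := by positivity
  rcases le_total u 1 with h1 | h1
  · have a1 : u ^ p ≤ u ^ β := Real.rpow_le_rpow_of_exponent_ge hu h1 hp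
    have a2 : u ^ β ≤ 1 := Real.rpow_le_one hu.le h1 hβ.le
    have a3 := Real.abs_log_mul_self_rpow_lt u β hu h1 hβ
    rw [abs_mul, abs_of_nonneg (Real.rpow_nonneg hu.le β)] at a3
    have a4 : u ^ p * (|Real.log u| + 1) ≤ u ^ β * (|Real.log u| + 1) := by gcongr
    have a5 : 0 ≤ R ^ P * (R + 1) := by positivity
    nlinarith
  · have a1 : u ^ p ≤ R ^ P :=
      (Real.rpow_le_rpow_of_exponent_le h1 hP).trans
        (Real.rpow_le_rpow hu.le huR (by linarith))
    have a2 : |Real.log u| ≤ R := by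
      rw [abs_of_nonneg (Real.log_nonneg h1)]
      have := Real.log_le_sub_one_of_pos hu
      linarith
    have a3 : u ^ p * (|Real.log u| + 1) ≤ R ^ P * (R + 1) := by gcongr
    linarith

/-- A continuous function on a compact interval has a positive bound. -/
lemma exists_pos_abs_bound {a b : ℝ} {h : ℝ → ℝ} (hh : ContinuousOn h (Icc a b)) :
    ∃ C, 0 < C ∧ ∀ x ∈ Icc a b, |h x| ≤ C := by
  obtain ⟨C, hC⟩ := isCompact_Icc.exists_bound_of_continuousOn hh
  exact ⟨max C 1, by positivity, fun x hx => (hC x hx).trans (le_max_left _ _)⟩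

/-- The pointwise estimate of `∂ₛK` with exponents left as abstract numbers: here `u = t - s`,
`a = α' s`, `e = α t - α s`, and `g`, `g'` are the values of `1/Γ` and its derivative. -/
lemma kernel_deriv_term_bound {u e a g g' C G : ℝ} (hu : 0 < u) (hC : 0 ≤ C)
    (ha : |a| ≤ C) (he : |e| ≤ C * u) (hg : |g| ≤ G) (hg' : |g'| ≤ G) :
    |(-1 * e * u ^ (e - 1) + -a * u ^ e * Real.log u) * g + u ^ e * (g' * -a)|
      ≤ 2 * C * G * (u ^ e * (|Real.log u| + 1)) := by
  have hG : 0 ≤ G := (abs_nonneg _).trans hg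
  have hue : 0 < u ^ e := Real.rpow_pos_of_pos hu e
  have h1 : |-1 * e * u ^ (e - 1)| ≤ C * u ^ e := by
    rw [Real.rpow_sub_one hu.ne', abs_mul, abs_of_pos (div_pos hue hu), neg_one_mul, abs_neg]
    calc |e| * (u ^ e / u) ≤ C * u * (u ^ e / u) := by gcongr
      _ = C * u ^ e := by field_simp
  have h2 : |-a * u ^ e * Real.log u| ≤ C * u ^ e * |Real.log u| := by
    rw [abs_mul, abs_mul, abs_neg, abs_of_pos hue]
    gcongr
  have h3 : |u ^ e * (g' * -a)| ≤ u ^ e * (G * C) := by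
    rw [abs_mul, abs_mul, abs_neg, abs_of_pos hue]
    gcongr
  have h4 : |(-1 * e * u ^ (e - 1) + -a * u ^ e * Real.log u) * g|
      ≤ (C * u ^ e + C * u ^ e * |Real.log u|) * G := by
    rw [abs_mul]
    gcongr
    exact (abs_add_le _ _).trans (add_le_add h1 h2)
  refine (abs_add_le _ _).trans ((add_le_add h4 h3).trans ?_)
  have : 0 ≤ C * G * u ^ e * |Real.log u| := by positivity
  nlinarith

/-- Kernel bound away from order one: if additionally `α(t) ≤ α** < 1` on `[0,T]`, then
`|∂_s K(t,s)| ≤ Q (t−s)^{α(t)−1} ≤ Q (t−s)^{α*−1}` for `0 ≤ s < t ≤ T`, where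
`K(t,s) = (t−s)^{α(t)−α(s)}/Γ(1+α(t)−α(s))`. -/
theorem kernel_deriv_bound_away_from_one
    (T αstar αss L : ℝ) (α : ℝ → ℝ) (f : ℝ → ℝ → ℝ)
    (hA : AssumptionA T α f αstar L)
    (hαss : αss < 1)
    (hub : ∀ t ∈ Set.Icc 0 T, α t ≤ αss) :
    ∃ Q : ℝ, 0 < Q ∧ ∀ t s : ℝ, 0 ≤ s → s < t → t ≤ T →
      |derivWithin (fun σ => (t - σ) ^ (α t - α σ) / Real.Gamma (1 + α t - α σ))
          (Set.Ico 0 t) s| ≤ Q * (t - s) ^ (α t - 1) ∧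
      |derivWithin (fun σ => (t - σ) ^ (α t - α σ) / Real.Gamma (1 + α t - α σ))
          (Set.Ico 0 t) s| ≤ Q * (t - s) ^ (αstar - 1) := by
  obtain ⟨A, hA0, hAb⟩ := exists_pos_abs_bound hA.hα_smooth.continuousOn
  obtain ⟨C, hC0, hCb⟩ := exists_pos_abs_bound
    (hA.hα_smooth.continuousOn_derivWithin (uniqueDiffOn_Icc hA.hT) (by norm_num))
  have hgs := contDiff_inv_realGamma
  obtain ⟨G₁, hG₁0, hG₁⟩ := exists_pos_abs_bound (a := 1 - 2 * A) (b := 1 + 2 * A)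
    hgs.continuous.continuousOn
  obtain ⟨G₂, hG₂0, hG₂⟩ := exists_pos_abs_bound (a := 1 - 2 * A) (b := 1 + 2 * A)
    (hgs.continuous_deriv le_rfl).continuousOn
  have hαd : DifferentiableOn ℝ α (Icc 0 T) := hA.hα_smooth.differentiableOn (by norm_num)
  set R := max 1 T with hR
  have hR1 : 1 ≤ R := le_max_left _ _
  set G := max G₁ G₂ with hG
  have hG0 : 0 < G := lt_max_of_lt_left hG₁0
  set B := R ^ (1 + A) * (R + 1) + 1 / (1 - αss) + 1 with hB
  have hβ : 0 < 1 - αss := by linarith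
  have hB0 : 0 < B := by positivity
  refine ⟨2 * C * G * B * R, by positivity, fun t s hs hst htT => ?_⟩
  have hsI : s ∈ Icc 0 T := ⟨hs, by linarith⟩
  have htI : t ∈ Icc 0 T := ⟨by linarith, htT⟩
  have hu : 0 < t - s := by linarith
  have huR : t - s ≤ R := le_trans (by linarith) (le_max_right 1 T)
  have hlip : |α t - α s| ≤ C * (t - s) := by
    have := (convex_Icc (0 : ℝ) T).norm_image_sub_le_of_norm_derivWithin_le hαd hCb hsI htI
    simpa [Real.norm_eq_abs, abs_of_pos hu] using this
  have hαs := abs_le.1 (hAb s hsI)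
  have hαt := abs_le.1 (hAb t htI)
  have hx : 1 + α t - α s ∈ Icc (1 - 2 * A) (1 + 2 * A) := ⟨by linarith, by linarith⟩
  have hderiv : derivWithin
      (fun σ => (t - σ) ^ (α t - α σ) / Real.Gamma (1 + α t - α σ)) (Set.Ico 0 t) s =
      (-1 * (α t - α s) * (t - s) ^ (α t - α s - 1)
        + -(derivWithin α (Icc 0 T) s) * (t - s) ^ (α t - α s) * Real.log (t - s))
          * (Real.Gamma (1 + α t - α s))⁻¹
        + (t - s) ^ (α t - α s) * (deriv (fun x : ℝ => (Real.Gamma x)⁻¹) (1 + α t - α s)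
          * -(derivWithin α (Icc 0 T) s)) := by
    have d0 : HasDerivWithinAt α (derivWithin α (Icc 0 T) s) (Ico 0 t) s :=
      (hαd s hsI).hasDerivWithinAt.mono fun x hx => ⟨hx.1, hx.2.le.trans htT⟩
    have d1 : HasDerivWithinAt (fun σ => t - σ) (-1) (Ico 0 t) s :=
      (hasDerivWithinAt_id s _).const_sub t
    have d2 := d1.rpow (d0.const_sub (α t)) hu
    have d3 : HasDerivAt (fun x : ℝ => (Real.Gamma x)⁻¹)
        (deriv (fun x : ℝ => (Real.Gamma x)⁻¹) (1 + α t - α s)) (1 + α t - α s) :=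
      ((hgs.differentiable one_ne_zero) _).hasDerivAt
    have d4 := d3.comp_hasDerivWithinAt s (d0.const_sub (1 + α t))
    have d5 := d2.mul d4
    exact d5.derivWithin (uniqueDiffOn_Ico 0 t s ⟨hs, hst⟩)
  have hmain : |derivWithin
      (fun σ => (t - σ) ^ (α t - α σ) / Real.Gamma (1 + α t - α σ)) (Set.Ico 0 t) s|
      ≤ 2 * C * G * B * (t - s) ^ (α t - 1) := by
    rw [hderiv]
    refine (kernel_deriv_term_bound hu hC0.le (hCb s hsI) hlip
      ((hG₁ _ hx).trans (le_max_left _ _)) ((hG₂ _ hx).trans (le_max_right _ _))).trans ?_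
    have hlog : (t - s) ^ (1 - α s) * (|Real.log (t - s)| + 1) ≤ B :=
      rpow_mul_log_bound hR1 hβ (by linarith [hub s hsI]) (by linarith) hu huR
    have hsplit : (t - s) ^ (α t - α s) = (t - s) ^ (α t - 1) * (t - s) ^ (1 - α s) := by
      rw [← Real.rpow_add hu]
      ring_nf
    calc 2 * C * G * ((t - s) ^ (α t - α s) * (|Real.log (t - s)| + 1))
        = 2 * C * G * (t - s) ^ (α t - 1)
            * ((t - s) ^ (1 - α s) * (|Real.log (t - s)| + 1)) := by rw [hsplit]; ring
      _ ≤ 2 * C * G * (t - s) ^ (α t - 1) * B := by gcongr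
      _ = _ := by ring
  refine ⟨hmain.trans ?_, hmain.trans ?_⟩
  · have : 2 * C * G * B ≤ 2 * C * G * B * R := le_mul_of_one_le_right (by positivity) hR1
    gcongr
  · have ht0 : t ∈ Ioc 0 T := ⟨by linarith, htT⟩
    have hp0 : 0 ≤ α t - αstar := by linarith [hA.hα_lb t ht0]
    have hp1 : α t - αstar ≤ 1 := by linarith [hA.hα_ub t ht0, hA.hαstar_pos]
    have hpow : (t - s) ^ (α t - αstar) ≤ R :=
      calc (t - s) ^ (α t - αstar) ≤ R ^ (α t - αstar) := Real.rpow_le_rpow hu.le huR hp0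
        _ ≤ R ^ (1 : ℝ) := Real.rpow_le_rpow_of_exponent_le hR1 hp1
        _ = R := Real.rpow_one R
    have hsplit : (t - s) ^ (α t - 1) = (t - s) ^ (α t - αstar) * (t - s) ^ (αstar - 1) := by
      rw [← Real.rpow_add hu]
      ring_nf
    rw [hsplit, ← mul_assoc]
    gcongr
end
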